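/- Let q be a prime power and let δ ∈ (0, 1 − 1/q²) be a constant. Then there exists a constant h_δ ∈ (0,1), depending only on q and δ, such that for all sufficiently large n the following holds: for every integer ℓ with 2 ≤ ℓ ≤ n, if v_1, …, v_ℓ are independent random vectors each distributed uniformly in the symplectic ball B_q^S(2n, ⌊δn⌋) ⊆ 𝔽_q^{2n}, then the probability that v_1 + v_2 + ⋯ + v_ℓ ∈ B_q^S(2n, ⌊δn⌋) is at most 2^{−h_δ n}. -/

import Mathlib

open Finset
open scoped Classical

/-- Symplectic weight of a vector in `F^{2n}`, written as `Fin n → F × F`. -/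
noncomputable def sympWt {F : Type} [Zero F] [DecidableEq F] {n : ℕ} (u : Fin n → F × F) : ℕ :=
  hammingNorm u

/-- The symplectic ball `B_q^S(2n, r)` of radius `r`. -/
noncomputable def sympBall (F : Type) [Fintype F] [Zero F] [DecidableEq F] (n r : ℕ) :
    Finset (Fin n → F × F) :=
  Finset.univ.filter fun x => sympWt x ≤ r

lemma coord_sum {G : Type*} [AddCommGroup G] [Fintype G] [DecidableEq G] (u : G) (x y : ℝ) :
    ∑ g : G, (if g = 0 then 1 else x) * (if g + u = 0 then 1 else y) =
      (Fintype.card G : ℝ) * (x * y) + (1 - x) * y + x * (1 - y) +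
        (if u = 0 then (1 - x) * (1 - y) else 0) := by
  have h1 : ∀ g : G, (if g = 0 then 1 else x) * (if g + u = 0 then 1 else y) =
      x * y + (if g = 0 then (1 - x) * y else 0) + (if g = -u then x * (1 - y) else 0)
       + (if g = 0 then (if u = 0 then (1 - x) * (1 - y) else 0) else 0) := by
    intro g
    have : g + u = 0 ↔ g = -u := add_eq_zero_iff_eq_neg
    simp only [this]
    by_cases hg : g = 0
    · subst hg
      by_cases hu : u = 0
      · subst hu; simp; ring
      · have : ¬ (0 = -u) := fun h => hu (by simpa using h.symm)
        simp [hu, this]; ring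
    · by_cases hu : g = -u
      · simp [hu]
        have : u ≠ 0 := by rintro rfl; simp at hu; exact hg hu
        simp [this]; ring
      · simp [hg, hu]
  rw [Finset.sum_congr rfl (fun g _ => h1 g)]
  simp [Finset.sum_add_distrib]

lemma pow_hamming {G : Type*} [AddCommGroup G] [DecidableEq G] {n : ℕ}
    (v : Fin n → G) {R : Type*} [CommSemiring R] (x : R) :
    x ^ hammingNorm v = ∏ i, if v i = 0 then 1 else x := by
  rw [Finset.prod_ite]
  simp [hammingNorm]

lemma gen_sum {G : Type*} [AddCommGroup G] [Fintype G] [DecidableEq G] {n : ℕ}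
    (u : Fin n → G) (x y : ℝ) :
    ∑ v : Fin n → G, x ^ hammingNorm v * y ^ hammingNorm (v + u) =
      ∏ i, ((Fintype.card G : ℝ) * (x * y) + (1 - x) * y + x * (1 - y) +
        (if u i = 0 then (1 - x) * (1 - y) else 0)) := by
  simp_rw [← coord_sum]
  rw [Finset.prod_univ_sum, Fintype.piFinset_univ]
  refine Finset.sum_congr rfl fun v _ => ?_
  rw [pow_hamming, pow_hamming, ← Finset.prod_mul_distrib]
  rfl

lemma upper_pair {G : Type*} [AddCommGroup G] [Fintype G] [DecidableEq G] {n : ℕ}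
    (B : Finset (Fin n → G)) (r : ℕ) (hB : ∀ v, v ∈ B ↔ hammingNorm v ≤ r)
    (u : Fin n → G) (m θ : ℝ) (hm0 : 0 < m) (hm1 : m ≤ 1) 
    (hθ : 2 * m + ((Fintype.card G : ℝ) - 2) * m ^ 2 ≤
      (1 + ((Fintype.card G : ℝ) - 1) * m ^ 2) * θ) :
    ((B.filter fun v => v + u ∈ B).card : ℝ) * (m ^ 2) ^ r ≤
      (1 + ((Fintype.card G : ℝ) - 1) * m ^ 2) ^ n * θ ^ hammingNorm u := by
  have hQ : (1 : ℝ) ≤ Fintype.card G := by exact_mod_cast Fintype.card_pos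
  calc ((B.filter fun v => v + u ∈ B).card : ℝ) * (m ^ 2) ^ r
      = ∑ v ∈ B.filter (fun v => v + u ∈ B), (m ^ 2) ^ r := by simp
    _ ≤ ∑ v ∈ B.filter (fun v => v + u ∈ B), m ^ hammingNorm v * m ^ hammingNorm (v + u) := by
        refine Finset.sum_le_sum fun v hv => ?_
        rw [Finset.mem_filter, hB, hB] at hv
        rw [← pow_mul, ← pow_add]
        exact pow_le_pow_of_le_one hm0.le hm1 (by omega)
    _ ≤ ∑ v : Fin n → G, m ^ hammingNorm v * m ^ hammingNorm (v + u) :=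
        Finset.sum_le_univ_sum_of_nonneg fun v => by positivity
    _ ≤ ∏ i, ((1 + ((Fintype.card G : ℝ) - 1) * m ^ 2) * if u i = 0 then 1 else θ) := by
        rw [gen_sum]
        refine Finset.prod_le_prod (fun i _ => ?_) (fun i _ => ?_)
        · have : 0 ≤ (1 - m) * m := mul_nonneg (by linarith) hm0.le
          split_ifs <;> nlinarith [mul_pos hm0 hm0, sq_nonneg (1 - m)]
        · split_ifs
          · nlinarith
          · nlinarith
    _ = _ := by
        rw [Finset.prod_mul_distrib, pow_hamming]
        simp

lemma upper_theta {G : Type*} [AddCommGroup G] [Fintype G] [DecidableEq G] {n : ℕ}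
    (B : Finset (Fin n → G)) (r : ℕ) (hB : ∀ v, v ∈ B ↔ hammingNorm v ≤ r)
    (w : Fin n → G) (x θ : ℝ) (hx0 : 0 < x) (hx1 : x ≤ 1) (hθ0 : 0 ≤ θ) (hθ1 : θ ≤ 1) :
    (∑ v ∈ B, θ ^ hammingNorm (v + w)) * x ^ r ≤
      (1 + ((Fintype.card G : ℝ) - 1) * x * θ) ^ n := by
  have hQ : (1 : ℝ) ≤ Fintype.card G := by exact_mod_cast Fintype.card_pos
  calc (∑ v ∈ B, θ ^ hammingNorm (v + w)) * x ^ r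
      = ∑ v ∈ B, x ^ r * θ ^ hammingNorm (v + w) := by rw [mul_comm, Finset.mul_sum]
    _ ≤ ∑ v ∈ B, x ^ hammingNorm v * θ ^ hammingNorm (v + w) := by
        refine Finset.sum_le_sum fun v hv => ?_
        rw [hB] at hv
        exact mul_le_mul_of_nonneg_right (pow_le_pow_of_le_one hx0.le hx1 hv) (by positivity)
    _ ≤ ∑ v : Fin n → G, x ^ hammingNorm v * θ ^ hammingNorm (v + w) :=
        Finset.sum_le_univ_sum_of_nonneg fun v => by positivity
    _ ≤ ∏ i : Fin n, (1 + ((Fintype.card G : ℝ) - 1) * x * θ) := by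
        rw [gen_sum]
        have h1 : 0 ≤ x * θ := by positivity
        have h2 : 0 ≤ (1 - x) * (1 - θ) := mul_nonneg (by linarith) (by linarith)
        refine Finset.prod_le_prod (fun i _ => ?_) (fun i _ => ?_)
        · have h3 : 0 ≤ (1 - x) * θ := mul_nonneg (by linarith) hθ0
          have h4 : 0 ≤ x * (1 - θ) := mul_nonneg hx0.le (by linarith)
          split_ifs <;> positivity
        · split_ifs <;> nlinarith
    _ = _ := by simp

lemma sphere_card {G : Type*} [AddCommGroup G] [Fintype G] [DecidableEq G] (n r : ℕ) :
    ((Finset.univ : Finset (Fin n → G)).filter fun v => hammingNorm v = r).card =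
      n.choose r * (Fintype.card G - 1) ^ r := by
  have h : ∑ v : Fin n → G, (Polynomial.X : Polynomial ℕ) ^ hammingNorm v =
      (Polynomial.C (Fintype.card G - 1) * Polynomial.X + 1) ^ n := by
    simp_rw [pow_hamming]
    have := Finset.prod_univ_sum (fun _ : Fin n => (Finset.univ : Finset G))
      (fun _ g => if g = 0 then (1 : Polynomial ℕ) else Polynomial.X)
    rw [Fintype.piFinset_univ] at this
    rw [← this]
    rw [Finset.prod_const, Finset.card_univ, Fintype.card_fin]
    congr 1
    rw [Finset.sum_ite]
    simp [Finset.filter_eq', Finset.filter_ne', Finset.card_erase_of_mem]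
    rw [add_comm]
  have h2 := congrArg (fun p => Polynomial.coeff p r) h
  simp only [Polynomial.finsetSum_coeff, Polynomial.coeff_X_pow] at h2
  rw [Finset.card_filter]
  simp_rw [eq_comm (a := r)] at h2
  rw [h2, add_pow, Polynomial.finsetSum_coeff]
  simp only [one_pow, mul_one, mul_pow, ← Polynomial.C_pow]
  simp only [Polynomial.coeff_mul_natCast, Polynomial.coeff_C_mul, Polynomial.coeff_X_pow]
  by_cases hr : r ≤ n
  · rw [Finset.sum_eq_single r]
    · simp [mul_comm]
    · intro b _ hb; simp [hb.symm]
    · intro hb; simp at hb; omega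
  · rw [Finset.sum_eq_zero]
    · rw [Nat.choose_eq_zero_of_lt (by omega)]; simp
    · intro b hb
      have : r ≠ b := by simp at hb; omega
      simp [this]

lemma mode_bound (n r : ℕ) (hr : r < n) :
    n ^ n ≤ (n + 1) * (n.choose r * r ^ r * (n - r) ^ (n - r)) := by
  obtain ⟨m, rfl⟩ := Nat.exists_eq_add_of_lt hr
  set n := r + m + 1 with hn
  have hs : n - r = m + 1 := by omega
  rw [hs]
  have key : ∀ k, k < n → n.choose (k+1) * (k+1) = n.choose k * (n - k) := fun k _ =>
    Nat.choose_succ_right_eq n k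
  have up : ∀ k, k < n → r ≤ k → n.choose (k+1) * r ^ (k+1) * (m+1) ^ (n-(k+1)) ≤
      n.choose k * r ^ k * (m+1) ^ (n-k) := by
    intro k hk hrk
    have e : n - k = (n - (k+1)) + 1 := by omega
    have := key k hk
    refine Nat.le_of_mul_le_mul_right (c := k+1) ?_ (by omega)
    calc n.choose (k+1) * r ^ (k+1) * (m+1) ^ (n-(k+1)) * (k+1) 
        = (n.choose (k+1) * (k+1)) * r ^ k * (m+1) ^ (n-(k+1)) * r := by ring
      _ = n.choose k * r ^ k * (m+1) ^ (n-(k+1)) * ((n-k) * r) := by rw [this]; ring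
      _ ≤ n.choose k * r ^ k * (m+1) ^ (n-(k+1)) * ((m+1) * (k+1)) := by
          apply Nat.mul_le_mul_left
          apply Nat.mul_le_mul <;> omega
      _ = _ := by rw [e, pow_succ]; ring
  have down : ∀ k, k < r → n.choose k * r ^ k * (m+1) ^ (n-k) ≤ 
      n.choose (k+1) * r ^ (k+1) * (m+1) ^ (n-(k+1)) := by
    intro k hk
    have e : n - k = (n - (k+1)) + 1 := by omega
    have := key k (by omega)
    refine Nat.le_of_mul_le_mul_right (c := k+1) ?_ (by omega)
    calc n.choose k * r ^ k * (m+1) ^ (n-k) * (k+1) 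
        = n.choose k * r ^ k * (m+1) ^ (n-(k+1)) * ((m+1) * (k+1)) := by
          rw [e, pow_succ]; ring
      _ ≤ n.choose k * r ^ k * (m+1) ^ (n-(k+1)) * ((n-k) * r) := by
          apply Nat.mul_le_mul_left
          apply Nat.mul_le_mul <;> omega
      _ = (n.choose (k+1) * (k+1)) * r ^ k * (m+1) ^ (n-(k+1)) * r := by rw [this]; ring
      _ = _ := by ring
  have upAll : ∀ j, r + j ≤ n → n.choose (r+j) * r ^ (r+j) * (m+1) ^ (n-(r+j)) ≤
      n.choose r * r ^ r * (m+1) ^ (m+1) := by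
    intro j
    induction j with
    | zero => intro _; simp [hs]
    | succ j ih => intro hj; exact (up (r+j) (by omega) (by omega)).trans (ih (by omega))
  have downAll : ∀ j, j ≤ r → n.choose (r-j) * r ^ (r-j) * (m+1) ^ (n-(r-j)) ≤
      n.choose r * r ^ r * (m+1) ^ (m+1) := by
    intro j
    induction j with
    | zero => intro _; simp [hs]
    | succ j ih =>
      intro hj
      have := down (r-(j+1)) (by omega)
      have e : r - (j+1) + 1 = r - j := by omega
      rw [e] at this
      exact this.trans (ih (by omega))
  have e : n = r + (m + 1) := by omega
  calc n ^ n = (r + (m+1)) ^ n := by rw [← e]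
    _ = ∑ k ∈ Finset.range (n+1), r ^ k * (m+1) ^ (n-k) * n.choose k := add_pow _ _ _
    _ ≤ ∑ k ∈ Finset.range (n+1), n.choose r * r ^ r * (m+1) ^ (m+1) := by
        refine Finset.sum_le_sum fun k hk => ?_
        have hk : k ≤ n := by simp at hk; omega
        rw [mul_comm, ← mul_assoc]
        rcases le_total r k with h | h
        · obtain ⟨j, rfl⟩ := Nat.exists_eq_add_of_le h
          exact upAll j hk
        · have := downAll (r-k) (by omega)
          rwa [Nat.sub_sub_self h] at this
    _ = _ := by simp

/-- The bound for pairs, abstract form. -/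
lemma pair_bound {G : Type*} [AddCommGroup G] [Fintype G] [DecidableEq G] {n : ℕ}
    (B : Finset (Fin n → G)) (r : ℕ) (hB : ∀ v, v ∈ B ↔ hammingNorm v ≤ r)
    (hr : r < n) (hr0 : 0 < r) (hQ : 2 ≤ Fintype.card G)
    (m θ ρ : ℝ) (hm0 : 0 < m) (hm1 : m ≤ 1) (hθ0 : 0 ≤ θ) (hθ1 : θ ≤ 1)
    (hm : ((Fintype.card G : ℝ) - 1) * m ^ 2 * (n - r) = r)
    (hθ : 2 * m + ((Fintype.card G : ℝ) - 2) * m ^ 2 ≤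
      (1 + ((Fintype.card G : ℝ) - 1) * m ^ 2) * θ)
    (hρ : 1 + ((Fintype.card G : ℝ) - 1) * m ^ 2 * θ ≤ 
      (1 + ((Fintype.card G : ℝ) - 1) * m ^ 2) * ρ)
    (w : Fin n → G) :
    (((B ×ˢ B).filter fun p => p.2 + (p.1 + w) ∈ B).card : ℝ) ≤
      (n + 1) ^ 2 * ρ ^ n * (B.card : ℝ) ^ 2 := by
  set Q : ℝ := (Fintype.card G : ℝ) with hQdef
  have hQ1 : (2 : ℝ) ≤ Q := by rw [hQdef]; exact_mod_cast hQ
  set A := 1 + (Q - 1) * m ^ 2 with hA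
  have hApos : 0 < A := by
    have : 0 ≤ (Q - 1) * m ^ 2 := mul_nonneg (by linarith) (by positivity)
    linarith
  have hnr : (0 : ℝ) < n - r := by
    have : (r : ℝ) < n := by exact_mod_cast hr
    linarith
  have hAn : A * (n - r) = n := by rw [hA]; linarith
  -- lower bound
  have low : A ^ n ≤ (n + 1) * ((m ^ 2) ^ r * B.card) := by
    have h1 : n.choose r * (Fintype.card G - 1) ^ r ≤ B.card := by
      rw [← sphere_card]
      refine Finset.card_le_card fun v hv => ?_
      rw [hB]; simp at hv; omega
    have h1' : (n.choose r : ℝ) * (Q - 1) ^ r ≤ B.card := by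
      have : ((n.choose r * (Fintype.card G - 1) ^ r : ℕ) : ℝ) ≤ B.card := by exact_mod_cast h1
      rw [Nat.cast_mul, Nat.cast_pow, Nat.cast_sub (by omega)] at this
      simpa using this
    have h2 : (n : ℝ) ^ n ≤ (n + 1) * (n.choose r * r ^ r * (n - r) ^ (n - r)) := by
      have := mode_bound n r hr
      have h3 : ((n ^ n : ℕ) : ℝ) ≤ (((n + 1) * (n.choose r * r ^ r * (n - r) ^ (n - r)) : ℕ) : ℝ) := by
        exact_mod_cast this
      push_cast [Nat.cast_sub hr.le] at h3
      exact h3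
    have h4 : ((n : ℝ) - r) ^ n = (n - r) ^ r * (n - r) ^ (n - r) := by
      rw [← pow_add]; congr 1; omega
    refine le_of_mul_le_mul_right ?_ (pow_pos hnr n)
    calc A ^ n * ((n : ℝ) - r) ^ n = (n : ℝ) ^ n := by rw [← mul_pow, hAn]
      _ ≤ (n + 1) * (n.choose r * r ^ r * (n - r) ^ (n - r)) := h2
      _ = (n + 1) * ((m ^ 2) ^ r * (n.choose r * (Q - 1) ^ r)) * ((n : ℝ) - r) ^ n := by
          rw [h4]
          have : (r : ℝ) ^ r = (Q - 1) ^ r * (m ^ 2) ^ r * (n - r) ^ r := by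
            rw [← mul_pow, ← mul_pow, hm]
          rw [this]; ring
      _ ≤ _ := by gcongr
  have hcard : (((B ×ˢ B).filter fun p => p.2 + (p.1 + w) ∈ B).card : ℝ) =
      ∑ v ∈ B, ((B.filter fun v' => v' + (v + w) ∈ B).card : ℝ) := by
    simp_rw [Finset.card_filter]
    rw [Finset.sum_product]
    push_cast
    rfl
  have hup : (((B ×ˢ B).filter fun p => p.2 + (p.1 + w) ∈ B).card : ℝ) * ((m ^ 2) ^ r) ^ 2 ≤
      A ^ n * (A * ρ) ^ n := by
    rw [hcard]
    calc (∑ v ∈ B, ((B.filter fun v' => v' + (v + w) ∈ B).card : ℝ)) * ((m ^ 2) ^ r) ^ 2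
        = (∑ v ∈ B, ((B.filter fun v' => v' + (v + w) ∈ B).card : ℝ) * (m ^ 2) ^ r) * (m ^ 2) ^ r := by
          rw [← Finset.sum_mul]; ring
      _ ≤ (∑ v ∈ B, A ^ n * θ ^ hammingNorm (v + w)) * (m ^ 2) ^ r := by
          refine mul_le_mul_of_nonneg_right (Finset.sum_le_sum fun v _ => ?_) (by positivity)
          exact upper_pair B r hB (v + w) m θ hm0 hm1 hθ
      _ = A ^ n * ((∑ v ∈ B, θ ^ hammingNorm (v + w)) * (m ^ 2) ^ r) := by
          rw [← Finset.mul_sum]; ring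
      _ ≤ A ^ n * (1 + (Q - 1) * m ^ 2 * θ) ^ n := by
          gcongr
          exact upper_theta B r hB w (m ^ 2) θ (by positivity) (pow_le_one₀ hm0.le hm1) hθ0 hθ1
      _ ≤ _ := by
          have : 0 ≤ (Q - 1) * m ^ 2 * θ := 
            mul_nonneg (mul_nonneg (by linarith) (by positivity)) hθ0
          gcongr
  have hρ0 : 0 ≤ ρ := by
    have : 0 ≤ (Q - 1) * m ^ 2 * θ := 
            mul_nonneg (mul_nonneg (by linarith) (by positivity)) hθ0
    by_contra hneg
    push Not at hneg
    nlinarith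
  refine le_of_mul_le_mul_right ?_ (show 0 < ((m ^ 2) ^ r) ^ 2 by positivity)
  calc _ ≤ A ^ n * (A * ρ) ^ n := hup
    _ = (A ^ n) ^ 2 * ρ ^ n := by rw [mul_pow]; ring
    _ ≤ ((n + 1) * ((m ^ 2) ^ r * B.card)) ^ 2 * ρ ^ n := by gcongr
    _ = _ := by ring

lemma reduce {V : Type*} [AddCommGroup V] [Fintype V] [DecidableEq V] (B : Finset V) (K : ℕ)
    (hK : ∀ w, ((B ×ˢ B).filter fun p => p.2 + (p.1 + w) ∈ B).card ≤ K) (k : ℕ) :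
    ((Finset.univ : Finset (Fin (k + 2) → V)).filter fun v =>
      (∀ i, v i ∈ B) ∧ (∑ i, v i) ∈ B).card ≤ K * B.card ^ k := by
  set S := (Finset.univ : Finset (Fin (k + 2) → V)).filter fun v =>
      (∀ i, v i ∈ B) ∧ (∑ i, v i) ∈ B with hS
  let f : (Fin (k + 2) → V) → (Fin k → V) := fun v i => v i.succ.succ
  have h1 := Finset.card_le_mul_card_image (f := f) S K (by
    intro t ht
    refine le_trans ?_ (hK (∑ i, t i))
    refine Finset.card_le_card_of_injOn (fun v => (v 0, v 1)) ?_ ?_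
    · intro v hv
      simp only [hS, Finset.coe_filter, Finset.mem_filter, Finset.mem_univ, true_and,
        Set.mem_ofPred_eq] at hv
      obtain ⟨⟨h1, h2⟩, h3⟩ := hv
      simp only [Finset.coe_filter, Finset.mem_product, Set.mem_ofPred_eq]
      refine ⟨⟨h1 _, h1 _⟩, ?_⟩
      rw [Fin.sum_univ_succ, Fin.sum_univ_succ] at h2
      rw [← h3]
      have e : (Fin.succ 0 : Fin (k+2)) = 1 := rfl
      rw [e] at h2
      convert h2 using 1
      simp only [f]
      abel
    · intro v hv v' hv' h
      simp only [Finset.coe_filter, Set.mem_ofPred_eq] at hv hv'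
      simp only [Prod.mk.injEq] at h
      funext i
      refine Fin.cases h.1 (fun i => ?_) i
      refine Fin.cases h.2 (fun i => ?_) i
      exact congrFun (hv.2.trans hv'.2.symm) i)
  refine h1.trans (Nat.mul_le_mul_left _ ?_)
  calc (S.image f).card ≤ (Fintype.piFinset fun _ : Fin k => B).card := by
        refine Finset.card_le_card fun t ht => ?_
        rw [Finset.mem_image] at ht
        obtain ⟨v, hv, rfl⟩ := ht
        rw [hS, Finset.mem_filter] at hv
        rw [Fintype.mem_piFinset]
        exact fun i => hv.2.1 _
    _ = _ := by simp

set_option maxHeartbeats 1000000 in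
/-- For a prime power `q` (realized as the cardinality of a finite field `F`)
and a constant `δ ∈ (0, 1 - 1/q²)`, there is a constant `h_δ ∈ (0,1)` such that for all
sufficiently large `n` and every `ℓ` with `2 ≤ ℓ ≤ n`, the probability that the sum of `ℓ`
independent uniformly random vectors of the symplectic ball `B_q^S(2n, ⌊δn⌋)` again lies in the
ball is at most `2^(-h_δ n)`.  (The probability is expressed by counting: the number of
`ℓ`-tuples of ball elements whose sum lies in the ball is at most `2^(-h_δ n)` times the total
number of `ℓ`-tuples of ball elements.) -/
theorem sympBall_sum_escape
    (q : ℕ) (F : Type) [Field F] [Fintype F] [DecidableEq F] (hF : Fintype.card F = q)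
    (δ : ℝ) (hδ0 : 0 < δ) (hδ1 : δ < 1 - 1 / (q : ℝ) ^ 2) :
    ∃ h : ℝ, 0 < h ∧ h < 1 ∧ ∃ N : ℕ, ∀ n : ℕ, N ≤ n → ∀ ℓ : ℕ, 2 ≤ ℓ → ℓ ≤ n →
      (((Finset.univ : Finset (Fin ℓ → Fin n → F × F)).filter fun v =>
          (∀ i, v i ∈ sympBall F n ⌊δ * (n : ℝ)⌋₊) ∧
            (∑ i, v i) ∈ sympBall F n ⌊δ * (n : ℝ)⌋₊).card : ℝ) ≤
        (2 : ℝ) ^ (-(h * (n : ℝ))) * ((sympBall F n ⌊δ * (n : ℝ)⌋₊).card : ℝ) ^ ℓ := by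
  have hq2 : 2 ≤ q := by rw [← hF]; exact Fintype.one_lt_card
  have hq2' : (2 : ℝ) ≤ q := by exact_mod_cast hq2
  have hcardG : Fintype.card (F × F) = q ^ 2 := by rw [Fintype.card_prod, hF]; ring
  set Q : ℝ := (q : ℝ) ^ 2 with hQdef
  have hQ4 : 4 ≤ Q := by rw [hQdef]; nlinarith
  have hcardG' : (Fintype.card (F × F) : ℝ) = Q := by rw [hcardG, hQdef]; push_cast; rfl
  have hδlt : δ < 1 := by
    have : 0 < 1 / Q := by positivity
    linarith
  -- the limiting parameter
  set L : ℝ := δ / ((1 - δ) * (Q - 1)) with hL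
  have hden : 0 < (1 - δ) * (Q - 1) := mul_pos (by linarith) (by linarith)
  have hL0 : 0 < L := div_pos hδ0 hden
  have hL1 : L < 1 := by
    rw [hL, div_lt_one hden]
    have : δ * Q < (1 - 1 / Q) * Q := by
      apply mul_lt_mul_of_pos_right hδ1; linarith
    have h2 : (1 - 1 / Q) * Q = Q - 1 := by field_simp
    nlinarith
  set s : ℝ := Real.sqrt L with hs
  have hs0 : 0 < s := Real.sqrt_pos.2 hL0
  have hs1 : s < 1 := by rw [hs, Real.sqrt_lt' one_pos]; simpa using hL1
  set c : ℝ := (1 - s) ^ 2 * (1 - δ) with hc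
  have hc0 : 0 < c := mul_pos (pow_pos (by linarith) 2) (by linarith)
  have hc1 : c < 1 := by
    have : (1 - s) ^ 2 < 1 := by nlinarith
    nlinarith
  set ρ : ℝ := 1 - c * (δ / 2) with hρ
  have hρ1 : ρ < 1 := by rw [hρ]; have := mul_pos hc0 hδ0; linarith
  have hρ0 : 0 < ρ := by rw [hρ]; nlinarith
  set a : ℝ := max ((1 + ρ) / 2) (3 / 4) with ha
  have ha1 : a < 1 := max_lt (by linarith) (by norm_num)
  have ha34 : 3 / 4 ≤ a := le_max_right _ _
  have haρ : ρ < a := lt_of_lt_of_le (by linarith) (le_max_left _ _)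
  have ha0 : 0 < a := by linarith
  refine ⟨-Real.logb 2 a, ?_, ?_, ?_⟩
  · have := Real.logb_neg one_lt_two ha0 ha1
    linarith
  · have : (-1 : ℝ) < Real.logb 2 a := by
      rw [Real.lt_logb_iff_rpow_lt one_lt_two ha0, Real.rpow_neg_one]
      linarith
    linarith
  have hpow : ∀ n : ℕ, (2 : ℝ) ^ (-(-Real.logb 2 a * (n : ℝ))) = a ^ n := by
    intro n
    rw [neg_mul, neg_neg, Real.rpow_mul (by norm_num), 
      Real.rpow_logb (by norm_num) (by norm_num) ha0, Real.rpow_natCast]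
  have hlim : ∀ᶠ n : ℕ in Filter.atTop, ((n : ℝ) + 1) ^ 2 * ρ ^ n ≤ a ^ n := by
    have hx0 : 0 ≤ ρ / a := by positivity
    have hx1 : ρ / a < 1 := (div_lt_one ha0).2 haρ
    have t := tendsto_pow_const_mul_const_pow_of_lt_one 2 hx0 hx1
    have ht : ∀ᶠ n : ℕ in Filter.atTop, (n : ℝ) ^ 2 * (ρ / a) ^ n < 1 / 4 :=
      t.eventually_lt_const (by norm_num)
    filter_upwards [ht, Filter.eventually_ge_atTop 1] with n hn hn1
    have hn1' : (1 : ℝ) ≤ n := by exact_mod_cast hn1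
    rw [div_pow] at hn
    have hap : 0 < a ^ n := by positivity
    have hρp : 0 < ρ ^ n := by positivity
    have : (n : ℝ) ^ 2 * ρ ^ n < 1 / 4 * a ^ n := by
      rw [← mul_div_assoc, div_lt_iff₀ hap] at hn
      exact hn
    have h4 : ((n : ℝ) + 1) ^ 2 ≤ 4 * (n : ℝ) ^ 2 := by nlinarith
    nlinarith
  obtain ⟨N1, hN1⟩ := Filter.eventually_atTop.1 hlim
  obtain ⟨N2, hN2⟩ := exists_nat_ge (2 / δ)
  refine ⟨max N1 (max N2 1), fun n hn ℓ hℓ2 hℓn => ?_⟩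
  have hnN1 : N1 ≤ n := le_trans (le_max_left _ _) hn
  have hnN2 : N2 ≤ n := le_trans (le_trans (le_max_left _ _) (le_max_right _ _)) hn
  have hn1 : 1 ≤ n := le_trans (le_trans (le_max_right _ _) (le_max_right _ _)) hn
  have hnpos : (0 : ℝ) < n := by exact_mod_cast hn1
  have hδn : 2 ≤ δ * n := by
    have : 2 / δ ≤ n := hN2.trans (by exact_mod_cast hnN2)
    rw [div_le_iff₀ hδ0] at this
    linarith
  rw [hpow]
  set r := ⌊δ * (n : ℝ)⌋₊ with hr
  have hr_le : (r : ℝ) ≤ δ * n := Nat.floor_le (by linarith)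
  have hr_gt : δ * n < r + 1 := Nat.lt_floor_add_one _
  have hr_half : δ / 2 * n ≤ r := by linarith
  have hr0' : (0 : ℝ) < r := by linarith
  have hr0 : 0 < r := by exact_mod_cast hr0'
  have hrn' : (r : ℝ) < n := hr_le.trans_lt (by have := mul_lt_mul_of_pos_right hδlt hnpos; linarith)
  have hrn : r < n := by exact_mod_cast hrn'
  have hnr : (0 : ℝ) < n - r := by linarith
  set x : ℝ := r / ((n - r) * (Q - 1)) with hx
  have hdx : 0 < ((n : ℝ) - r) * (Q - 1) := mul_pos hnr (by linarith)
  have hx0 : 0 < x := div_pos hr0' hdx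
  have hxL : x ≤ L := by
    rw [hx, hL, div_le_div_iff₀ hdx hden]
    have : (r : ℝ) * (1 - δ) ≤ δ * (n - r) := by linarith
    have h3 : 0 ≤ Q - 1 := by linarith
    have h5 := mul_le_mul_of_nonneg_right this h3
    linarith
  set m : ℝ := Real.sqrt x with hm
  have hm0 : 0 < m := Real.sqrt_pos.2 hx0
  have hms : m ≤ s := Real.sqrt_le_sqrt hxL
  have hmsq : m ^ 2 = x := Real.sq_sqrt hx0.le
  have hQx : (Q - 1) * x * (n - r) = r := by
    have : Q - 1 ≠ 0 := by linarith
    rw [hx]; field_simp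
  have hA : (1 + (Q - 1) * x) * (n - r) = n := by linarith
  have hApos : 0 < 1 + (Q - 1) * x := by
    have : 0 < (Q - 1) * x := mul_pos (by linarith) hx0
    linarith
  have hA1 : (1 + (Q - 1) * x) * (1 - δ) ≤ 1 := by
    refine le_of_mul_le_mul_right ?_ hnr
    calc (1 + (Q - 1) * x) * (1 - δ) * (n - r) = n * (1 - δ) := by rw [mul_right_comm, hA]
      _ ≤ 1 * (n - r) := by linarith
  have hA2 : (1 + (Q - 1) * x) * (δ / 2) ≤ (Q - 1) * x := by
    refine le_of_mul_le_mul_right ?_ hnr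
    calc (1 + (Q - 1) * x) * (δ / 2) * (n - r) = n * (δ / 2) := by rw [mul_right_comm, hA]
      _ ≤ (Q - 1) * x * (n - r) := by rw [hQx]; linarith
  have hAc : (1 + (Q - 1) * x) * c ≤ (1 - m) ^ 2 := by
    have h1 : (1 - s) ^ 2 ≤ (1 - m) ^ 2 := by
      apply pow_le_pow_left₀ <;> linarith
    have h2 : (1 + (Q - 1) * x) * c = ((1 + (Q - 1) * x) * (1 - δ)) * (1 - s) ^ 2 := by
      rw [hc]; ring
    rw [h2]
    have h6 := mul_le_mul_of_nonneg_right hA1 (sq_nonneg (1 - s))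
    linarith
  have hB : ∀ v : Fin n → F × F, v ∈ sympBall F n r ↔ hammingNorm v ≤ r := by
    intro v
    unfold sympBall
    rw [Finset.mem_filter]
    exact ⟨fun h => h.2, fun h => ⟨Finset.mem_univ _, h⟩⟩
  have hpair := pair_bound (sympBall F n r) r hB hrn hr0 (by rw [hcardG]; nlinarith)
    m (1 - c) ρ hm0 (by linarith) (by linarith) (by linarith)
    (by rw [hcardG', hmsq, hQx])
    (by rw [hcardG', hmsq]; linarith)
    (by
      rw [hcardG', hmsq, hρ]
      have h7 := mul_le_mul_of_nonneg_left hA2 hc0.le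
      linarith)
  obtain ⟨k, rfl⟩ := Nat.exists_eq_add_of_le' hℓ2
  set B := sympBall F n r with hBdef
  have hK : ∀ w, ((B ×ˢ B).filter fun p => p.2 + (p.1 + w) ∈ B).card ≤
      ⌊a ^ n * (B.card : ℝ) ^ 2⌋₊ := by
    intro w
    refine Nat.le_floor ((hpair w).trans ?_)
    exact mul_le_mul_of_nonneg_right (hN1 n hnN1) (by positivity)
  have hred := reduce B _ hK k
  have hred' : (((Finset.univ : Finset (Fin (k + 2) → Fin n → F × F)).filter fun v =>
      (∀ i, v i ∈ B) ∧ (∑ i, v i) ∈ B).card : ℝ) ≤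
      ((⌊a ^ n * (B.card : ℝ) ^ 2⌋₊ * B.card ^ k : ℕ) : ℝ) := by
    convert (Nat.cast_le (α := ℝ)).2 hred
  refine hred'.trans ?_
  rw [Nat.cast_mul, Nat.cast_pow]
  calc _ ≤ (a ^ n * (B.card : ℝ) ^ 2) * (B.card : ℝ) ^ k := by
        gcongr
        exact Nat.floor_le (by positivity)
    _ = _ := by ring
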